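/- Let σ be a Borel probability measure on ℝ with support contained in [0,∞), let m ≥ 1 be an integer, and let 0 ≤ i ≤ m−1 with γ_i := ∫ t^i dσ(t) > 0. Let σ_i be the Borel probability measure on ℝ defined as the pushforward under t ↦ t^m of the measure γ_i⁻¹ · t^i dσ(t) (in particular σ₀ is the pushforward of σ under t ↦ t^m). Then: (i) if r ∈ supp σ and r ≠ 0, then r^m ∈ supp σ_i; (ii) if r ∈ supp σ_i and r ≠ 0, then r^{1/m} ∈ supp σ; (iii) 0 ∈ supp σ if and only if 0 ∈ supp σ₀. -/

import Mathlib

open MeasureTheory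

/-- The (topological) support of a Borel measure: the set of points all of whose
open neighborhoods have positive measure. -/
def msupp {X : Type*} [TopologicalSpace X] [MeasurableSpace X] (μ : Measure X) : Set X :=
  {x | ∀ U : Set X, IsOpen U → x ∈ U → 0 < μ U}

/-!
The power map `t ↦ t ^ m` is continuous and closed, so the support of a pushforward under it is
the image of the support. Multiplying by a density only shrinks the support, and changes nothing on
an open set where the density does not vanish, here `(0, ∞)`.
-/

open scoped ENNReal

section Support

variable {X : Type*} [TopologicalSpace X] [MeasurableSpace X] {μ : Measure X}

theorem msupp_eq_support (μ : Measure X) : msupp μ = μ.support := by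
  rw [Measure.support_eq_forall_isOpen]
  exact Set.ext fun x => forall_congr' fun U => forall_comm

theorem interior_inter_support_subset_support_withDensity [OpensMeasurableSpace X]
    {f : X → ℝ≥0∞} {s : Set X} (hs : MeasurableSet s) (hf : AEMeasurable f (μ.restrict s))
    (hf₀ : ∀ᵐ x ∂μ.restrict s, f x ≠ 0) :
    interior s ∩ μ.support ⊆ (μ.withDensity f).support :=
  calc
    interior s ∩ μ.support ⊆ (μ.restrict s).support := Measure.interior_inter_support
    _ ⊆ ((μ.restrict s).withDensity f).support :=
      (withDensity_absolutelyContinuous' hf hf₀).support_mono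
    _ = ((μ.withDensity f).restrict s).support := by rw [restrict_withDensity hs]
    _ ⊆ (μ.withDensity f).support := Measure.support_mono Measure.restrict_le_self

variable {Y : Type*} [TopologicalSpace Y] [MeasurableSpace Y] {f : X → Y}

theorem mem_support_map_of_continuousAt {x : X} (hf : AEMeasurable f μ) (hfx : ContinuousAt f x)
    (hx : x ∈ μ.support) : f x ∈ (μ.map f).support := by
  rw [Measure.mem_support_iff_forall] at hx ⊢
  exact fun U hU => (hx _ (hfx hU)).trans_le (Measure.le_map_apply hf U)

theorem support_map_subset_image_support [HereditarilyLindelofSpace X] [OpensMeasurableSpace Y]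
    (hf : AEMeasurable f μ) (hf_closed : IsClosedMap f) :
    (μ.map f).support ⊆ f '' μ.support := by
  have himage : IsClosed (f '' μ.support) := hf_closed _ Measure.isClosed_support
  refine Measure.support_subset_of_isClosed himage ?_
  rw [mem_ae_map_iff hf himage.measurableSet]
  exact Filter.mem_of_superset Measure.support_mem_ae (Set.subset_preimage_image f _)

theorem support_map_eq_image_support [HereditarilyLindelofSpace X] [OpensMeasurableSpace X]
    [BorelSpace Y] (hf : Continuous f) (hf_closed : IsClosedMap f) :
    (μ.map f).support = f '' μ.support :=
  (support_map_subset_image_support hf.aemeasurable hf_closed).antisymm <|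
    Set.image_subset_iff.mpr fun _ =>
      mem_support_map_of_continuousAt hf.aemeasurable hf.continuousAt

end Support

theorem msupp_map_pow {R : Type*} [NormedDivisionRing R] [ProperSpace R] [MeasurableSpace R]
    [BorelSpace R] (μ : Measure R) (m : ℕ) :
    msupp (μ.map fun t => t ^ m) = (fun t => t ^ m) '' msupp μ := by
  simp only [msupp_eq_support]
  exact support_map_eq_image_support (continuous_pow m) (isClosedMap_pow R m)

theorem stmt_7_general {σ : Measure ℝ} (hsupp : msupp σ ⊆ Set.Ici 0) {m : ℕ} (hm : m ≠ 0)
    {f : ℝ → ℝ≥0∞} (hf : AEMeasurable f σ) (hf₀ : ∀ᵐ t ∂σ.restrict (Set.Ioi 0), f t ≠ 0) :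
    (∀ r ∈ msupp σ, r ≠ 0 → r ^ m ∈ msupp ((σ.withDensity f).map fun t => t ^ m)) ∧
    (∀ r ∈ msupp ((σ.withDensity f).map fun t => t ^ m), r ^ (m : ℝ)⁻¹ ∈ msupp σ) ∧
    (0 ∈ msupp σ ↔ 0 ∈ msupp (σ.map fun t => t ^ m)) := by
  simp only [msupp_map_pow]
  refine ⟨fun r hr hr₀ => Set.mem_image_of_mem _ ?_, ?_, ?_⟩
  · have hr_pos : 0 < r := (hsupp hr).lt_of_ne' hr₀
    rw [msupp_eq_support] at hr ⊢
    refine interior_inter_support_subset_support_withDensity measurableSet_Ioi hf.restrict hf₀ ?_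
    exact ⟨by rwa [interior_Ioi], hr⟩
  · rintro _ ⟨t, ht, rfl⟩
    have ht_σ : t ∈ msupp σ := by
      rw [msupp_eq_support] at ht ⊢
      exact (withDensity_absolutelyContinuous σ f).support_mono ht
    rwa [Real.pow_rpow_inv_natCast (hsupp ht_σ) hm]
  · simp only [Set.mem_image, pow_eq_zero_iff hm, exists_eq_right]

/-- Relation between the support of the Berger measure `σ` of a subnormal weighted shift
`W_ω` and the supports of the Berger measures `σᵢ` of the summands of `W_ω^m`. -/
theorem stmt_7 (σ : Measure ℝ) [IsProbabilityMeasure σ]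
    (hsupp : msupp σ ⊆ Set.Ici (0 : ℝ))
    (m : ℕ) (hm : 1 ≤ m) (i : ℕ) (hi : i ≤ m - 1)
    (γ : ℝ) (hγ : γ = ∫ t : ℝ, t ^ i ∂σ) (hγpos : 0 < γ)
    (σi : Measure ℝ)
    (hσi : σi = (σ.withDensity (fun t => ENNReal.ofReal (γ⁻¹ * t ^ i))).map (fun t => t ^ m))
    (σ0 : Measure ℝ) (hσ0 : σ0 = σ.map (fun t => t ^ m)) :
    (∀ r : ℝ, r ∈ msupp σ → r ≠ 0 → r ^ m ∈ msupp σi) ∧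
    (∀ r : ℝ, r ∈ msupp σi → r ≠ 0 → r ^ ((m : ℝ)⁻¹) ∈ msupp σ) ∧
    ((0 : ℝ) ∈ msupp σ ↔ (0 : ℝ) ∈ msupp σ0) := by
  subst hσi hσ0
  have density_ne_zero : ∀ t ∈ Set.Ioi (0 : ℝ), ENNReal.ofReal (γ⁻¹ * t ^ i) ≠ 0 := fun t ht =>
    (ENNReal.ofReal_pos.mpr (mul_pos (inv_pos.mpr hγpos) (pow_pos ht i))).ne'
  obtain ⟨pow_mem, root_mem, zero_mem_iff⟩ := stmt_7_general hsupp (Nat.one_le_iff_ne_zero.mp hm)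
    (by fun_prop) (ae_restrict_of_forall_mem measurableSet_Ioi density_ne_zero)
  exact ⟨pow_mem, fun r hr _ => root_mem r hr, zero_mem_iff⟩
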